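/- arXiv:1905.08140 — 2 statements merged into one kernel-verified Lean document; each statement's English description precedes it below -/
import Mathlib

section
/- The Toda lattice derivations pairwise commute: for all j, k ≥ 0, D_j ∘ D_k = D_k ∘ D_j as derivations of the ring 𝒜. -/
open MvPolynomial

noncomputable section

/-- The ring 𝒜 = ℤ[v_i, w_i : i ∈ ℤ], with variables indexed by ℤ ⊕ ℤ
(`Sum.inl i` is `v_i`, `Sum.inr i` is `w_i`). -/
abbrev 𝒜 : Type := MvPolynomial (ℤ ⊕ ℤ) ℤ

/-- The variable v_i. -/
def vV (i : ℤ) : 𝒜 := X (Sum.inl i)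
/-- The variable w_i. -/
def wV (i : ℤ) : 𝒜 := X (Sum.inr i)

/-- The shift operator Λ, as a ring (ℤ-algebra) automorphism of 𝒜, with
Λ(v_i) = v_{i+1}, Λ(w_i) = w_{i+1}. -/
def Λs : 𝒜 ≃ₐ[ℤ] 𝒜 :=
  MvPolynomial.renameEquiv ℤ (Equiv.sumCongr (Equiv.addRight (1 : ℤ)) (Equiv.addRight (1 : ℤ)))

/-- Integer powers Λ^k of the shift automorphism. -/
def Λz (k : ℤ) : 𝒜 ≃ₐ[ℤ] 𝒜 := Λs ^ k

/-- The identity difference operator, as its family of coefficients (coefficient of Λ^m). -/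
def oneOp : ℤ → 𝒜 := fun m => if m = 0 then 1 else 0

/-- Left multiplication by L = Λ + v_0 + w_0 Λ^{-1} on difference operators,
written in terms of coefficients: `(L·P)_m = Λ(P_{m-1}) + v_0 P_m + w_0 Λ^{-1}(P_{m+1})`. -/
def mulL (P : ℤ → 𝒜) : ℤ → 𝒜 := fun m => Λs (P (m - 1)) + vV 0 * P m + wV 0 * Λs.symm (P (m + 1))

/-- The coefficients of the difference operator L^k. -/
def Lpow (k : ℕ) : ℤ → 𝒜 := mulL^[k] oneOp

/-- The nonnegative part P_+ of a difference operator. -/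
def plusPart (P : ℤ → 𝒜) : ℤ → 𝒜 := fun m => if 0 ≤ m then P m else 0

/-- Right multiplication by L on difference operators:
`(P·L)_m = P_{m-1} + P_m Λ^m(v_0) + P_{m+1} Λ^{m+1}(w_0)`. -/
def mulRL (P : ℤ → 𝒜) : ℤ → 𝒜 := fun m =>
  P (m - 1) + P m * Λz m (vV 0) + P (m + 1) * Λz (m + 1) (wV 0)

/-- The coefficients of the commutator [A_k, L] = A_k L - L A_k, where A_k = (L^{k+1})_+. -/
def brkt (k : ℕ) : ℤ → 𝒜 := fun m =>
  mulRL (plusPart (Lpow (k + 1))) m - mulL (plusPart (Lpow (k + 1))) m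

/-- The k-th Toda lattice derivation D_k : the unique admissible derivation of 𝒜
(i.e. derivation commuting with Λ) with D_k(v_0) = Coef([A_k,L],0),
D_k(w_0) = Coef([A_k,L],-1); hence D_k(v_i) = Λ^i(Coef([A_k,L],0)) and
D_k(w_i) = Λ^i(Coef([A_k,L],-1)). -/
def Dtoda (k : ℕ) : Derivation ℤ 𝒜 𝒜 :=
  MvPolynomial.mkDerivation ℤ (fun s => match s with
    | Sum.inl i => Λz i (brkt k 0)
    | Sum.inr i => Λz i (brkt k (-1)))



/-! ## Abstract zero-curvature argument in a ring with a splitting -/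

theorem aux_pow_deriv {R : Type*} [Ring R] (d : R →+ R) (hd : ∀ a b, d (a * b) = d a * b + a * d b)
    (A L : R) (h : d L = A * L - L * A) (n : ℕ) : d (L ^ n) = A * L ^ n - L ^ n * A := by
  have h1 : d 1 = 0 := by
    have := hd 1 1
    simp only [mul_one, one_mul] at this
    simpa using this
  induction n with
  | zero => simp [h1]
  | succ n ih =>
    rw [pow_succ, hd, ih, h]
    noncomm_ring

theorem aux_commute {R : Type*} [Ring R] (p d e : R →+ R)
    (Rp Rm : AddSubgroup R)
    (hpm : ∀ a, a ∈ Rp → ∀ b, b ∈ Rp → a * b ∈ Rp)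
    (hmm : ∀ a, a ∈ Rm → ∀ b, b ∈ Rm → a * b ∈ Rm)
    (hp1 : ∀ a, p a ∈ Rp) (hp2 : ∀ a, a - p a ∈ Rm)
    (hp3 : ∀ a, a ∈ Rp → p a = a) (hp4 : ∀ a, a ∈ Rm → p a = 0)
    (hd : ∀ a b, d (a * b) = d a * b + a * d b)
    (he : ∀ a b, e (a * b) = e a * b + a * e b)
    (hdp : ∀ a, d (p a) = p (d a)) (hep : ∀ a, e (p a) = p (e a))
    (L : R) (m n : ℕ)
    (hdL : d L = p (L ^ m) * L - L * p (L ^ m))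
    (heL : e L = p (L ^ n) * L - L * p (L ^ n)) :
    d (e L) = e (d L) := by
  have hdn := aux_pow_deriv d hd _ L hdL n
  have hem := aux_pow_deriv e he _ L heL m
  have hc : L ^ m * L ^ n = L ^ n * L ^ m := by rw [← pow_add, ← pow_add, add_comm]
  set C := L ^ m with hC
  set B := L ^ n with hB
  have key : d (p B) - e (p C) + (p B * p C - p C * p B) = 0 := by
    rw [hdp, hep, hdn, hem]
    have e1 : p C * p B - p B * p C ∈ Rp := Rp.sub_mem (hpm _ (hp1 _) _ (hp1 _)) (hpm _ (hp1 _) _ (hp1 _))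
    have e2 : (B - p B) * (C - p C) - (C - p C) * (B - p B) ∈ Rm :=
      Rm.sub_mem (hmm _ (hp2 _) _ (hp2 _)) (hmm _ (hp2 _) _ (hp2 _))
    have e3 : (p C * B - B * p C) - (p B * C - C * p B)
        = (p C * p B - p B * p C) + ((B - p B) * (C - p C) - (C - p C) * (B - p B))
          + (C * B - B * C) := by
      noncomm_ring
    rw [← map_sub, e3, hc, sub_self, add_zero, map_add, hp3 _ e1, hp4 _ e2]
    noncomm_ring
  rw [heL, hdL, map_sub, map_sub, hd, hd, he, he, hdL, heL]
  have key' : d (p B) = e (p C) - (p B * p C - p C * p B) := by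
    rw [← sub_eq_zero, ← key]; abel
  rw [key']
  noncomm_ring

/-! ## The ring of difference operators -/

instance todaAction : MulSemiringAction (Multiplicative ℤ) 𝒜 :=
  MulSemiringAction.compHom 𝒜 (zpowersHom (𝒜 ≃ₐ[ℤ] 𝒜) Λs)

theorem toda_smul (g : Multiplicative ℤ) (a : 𝒜) : g • a = Λz (Multiplicative.toAdd g) a := rfl

abbrev TOp : Type := SkewMonoidAlgebra 𝒜 (Multiplicative ℤ)

/-- coefficient -/
def cf (P : TOp) (m : ℤ) : 𝒜 := P.coeff (Multiplicative.ofAdd m)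

theorem TOp_ext {P Q : TOp} (h : ∀ m, cf P m = cf Q m) : P = Q :=
  SkewMonoidAlgebra.ext fun a => h (Multiplicative.toAdd a)

theorem cf_add (P Q : TOp) (m : ℤ) : cf (P + Q) m = cf P m + cf Q m := by
  simp [cf, SkewMonoidAlgebra.coeff_add]

theorem cf_sub (P Q : TOp) (m : ℤ) : cf (P - Q) m = cf P m - cf Q m := by
  simp [cf, SkewMonoidAlgebra.coeff_sub]

/-- monomials -/
def mono (m : ℤ) (a : 𝒜) : TOp := SkewMonoidAlgebra.single (Multiplicative.ofAdd m) a

theorem cf_mono (n : ℤ) (a : 𝒜) (m : ℤ) : cf (mono n a) m = if n = m then a else 0 := by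
  simp [cf, mono, Finsupp.single_apply]

theorem cf_mono_mul (n : ℤ) (a : 𝒜) (P : TOp) (m : ℤ) :
    cf (mono n a * P) m = a * Λz n (cf P (m - n)) := by
  unfold cf mono
  rw [SkewMonoidAlgebra.coeff_single_mul, toda_smul, ← ofAdd_neg, ← ofAdd_add, neg_add_eq_sub]
  rfl

theorem cf_mul_mono (n : ℤ) (a : 𝒜) (P : TOp) (m : ℤ) :
    cf (P * mono n a) m = cf P (m - n) * Λz (m - n) a := by
  unfold cf mono
  rw [SkewMonoidAlgebra.coeff_mul_single, toda_smul, ← ofAdd_neg, ← ofAdd_add, ← sub_eq_add_neg]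
  rfl

theorem mono_mul_mono (m n : ℤ) (a b : 𝒜) : mono m a * mono n b = mono (m + n) (a * Λz m b) := by
  unfold mono
  rw [SkewMonoidAlgebra.single_mul_single]
  rfl

theorem mono_add (m : ℤ) (a b : 𝒜) : mono m (a + b) = mono m a + mono m b :=
  SkewMonoidAlgebra.single_add _ _ _

theorem TOp_ind {p : TOp → Prop} (P : TOp) (h1 : ∀ m a, p (mono m a))
    (h2 : ∀ P Q, p P → p Q → p (P + Q)) : p P :=
  SkewMonoidAlgebra.induction_on' P (fun g a => h1 (Multiplicative.toAdd g) a) h2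

def LOp : TOp := mono 1 1 + mono 0 (vV 0) + mono (-1) (wV 0)

theorem Λz_zero (a : 𝒜) : Λz 0 a = a := rfl
theorem Λz_one (a : 𝒜) : Λz 1 a = Λs a := by simp [Λz]
theorem Λz_neg_one (a : 𝒜) : Λz (-1) a = Λs.symm a := by
  simp only [Λz, zpow_neg, zpow_one]; rfl
theorem Λz_add (m n : ℤ) (a : 𝒜) : Λz (m + n) a = Λz m (Λz n a) := by
  simp only [Λz, zpow_add]; rfl

theorem cf_L_mul (P : TOp) : cf (LOp * P) = mulL (cf P) := by
  funext m
  simp only [LOp, add_mul, cf_add, cf_mono_mul, mulL, Λz_one, Λz_zero, Λz_neg_one, one_mul,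
    sub_zero, sub_neg_eq_add]

theorem cf_mul_L (P : TOp) : cf (P * LOp) = mulRL (cf P) := by
  funext m
  simp only [LOp, mul_add, cf_add, cf_mul_mono, mulRL, map_one, mul_one,
    sub_zero, sub_neg_eq_add]

theorem cf_pow (k : ℕ) : cf (LOp ^ k) = Lpow k := by
  induction k with
  | zero =>
    funext m
    have : (1 : TOp) = mono 0 1 := rfl
    simp only [pow_zero, this, cf_mono, Lpow, Function.iterate_zero, id, oneOp, eq_comm]
  | succ k ih =>
    rw [pow_succ', cf_L_mul, ih, Lpow, Lpow, Function.iterate_succ_apply']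

/-- positive part -/
def pOp : TOp →+ TOp where
  toFun P := ⟨P.coeff.filter (fun g => 0 ≤ Multiplicative.toAdd g)⟩
  map_zero' := by
    rw [SkewMonoidAlgebra.coeff_zero, Finsupp.filter_zero]; rfl
  map_add' P Q := by simp [Finsupp.filter_add]

theorem cf_pOp (P : TOp) : cf (pOp P) = plusPart (cf P) := by
  funext m
  simp [cf, pOp, plusPart, Finsupp.filter_apply]

def dOp (k : ℕ) : TOp →+ TOp where
  toFun P := ⟨P.coeff.mapRange (Dtoda k) (map_zero _)⟩
  map_zero' := by simp
  map_add' P Q := by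
    rw [SkewMonoidAlgebra.coeff_add, Finsupp.mapRange_add (map_add _), SkewMonoidAlgebra.ofCoeff_add]

theorem cf_dOp (k : ℕ) (P : TOp) (m : ℤ) : cf (dOp k P) m = Dtoda k (cf P m) := by
  simp [cf, dOp]

theorem Λs_v (i : ℤ) : Λs (X (Sum.inl i)) = X (Sum.inl (i + 1)) := by
  simp [Λs]
theorem Λs_w (i : ℤ) : Λs (X (Sum.inr i)) = X (Sum.inr (i + 1)) := by
  simp [Λs]

theorem D_v (k : ℕ) (i : ℤ) : Dtoda k (X (Sum.inl i)) = Λz i (brkt k 0) := by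
  simp [Dtoda, mkDerivation_X]
theorem D_w (k : ℕ) (i : ℤ) : Dtoda k (X (Sum.inr i)) = Λz i (brkt k (-1)) := by
  simp [Dtoda, mkDerivation_X]

theorem D_Λs (k : ℕ) (x : 𝒜) : Dtoda k (Λs x) = Λs (Dtoda k x) := by
  induction x using MvPolynomial.induction_on with
  | C a =>
    rw [← MvPolynomial.algebraMap_eq, AlgEquiv.commutes, Derivation.map_algebraMap, map_zero]
  | add p q hp hq => simp only [map_add, hp, hq]
  | mul_X p s hp =>
    have hs : Dtoda k (Λs (X s)) = Λs (Dtoda k (X s)) := by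
      rcases s with i | i
      · rw [Λs_v, D_v, D_v, add_comm, Λz_add, Λz_one]
      · rw [Λs_w, D_w, D_w, add_comm, Λz_add, Λz_one]
    simp only [map_mul, Derivation.leibniz, hp, hs, map_add, smul_eq_mul]

theorem D_Λs_symm (k : ℕ) (x : 𝒜) : Dtoda k (Λs.symm x) = Λs.symm (Dtoda k x) := by
  apply Λs.injective
  rw [← D_Λs, AlgEquiv.apply_symm_apply, AlgEquiv.apply_symm_apply]

theorem D_Λz (k : ℕ) (m : ℤ) : ∀ x : 𝒜, Dtoda k (Λz m x) = Λz m (Dtoda k x) := by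
  induction m using Int.induction_on with
  | zero => intro x; rfl
  | succ i ih => intro x; rw [Λz_add, Λz_add, ih, Λz_one, Λz_one, D_Λs]
  | pred i ih =>
    intro x
    rw [sub_eq_add_neg, Λz_add, Λz_add, ih, Λz_neg_one, Λz_neg_one, D_Λs_symm]

theorem dOp_mono (k : ℕ) (m : ℤ) (a : 𝒜) : dOp k (mono m a) = mono m (Dtoda k a) := by
  apply TOp_ext
  intro n
  rw [cf_dOp, cf_mono, cf_mono]
  split_ifs <;> simp

theorem dOp_mul (k : ℕ) (P Q : TOp) : dOp k (P * Q) = dOp k P * Q + P * dOp k Q := by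
  refine TOp_ind (p := fun P => dOp k (P * Q) = dOp k P * Q + P * dOp k Q) P (fun m a => ?_) (fun P P' h h' => ?_)
  · refine TOp_ind (p := fun Q => dOp k (mono m a * Q) = dOp k (mono m a) * Q + mono m a * dOp k Q)
      Q (fun n b => ?_) (fun Q Q' h h' => ?_)
    · rw [mono_mul_mono, dOp_mono, dOp_mono, dOp_mono, mono_mul_mono, mono_mul_mono, ← mono_add,
        Derivation.leibniz, D_Λz, smul_eq_mul, smul_eq_mul, mul_comm (Λz m b), add_comm (a * _)]
    · rw [mul_add, map_add, h, h', map_add]; noncomm_ring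
  · rw [add_mul, map_add, h, h', map_add]; noncomm_ring

def RpOp : AddSubgroup TOp where
  carrier := {P | ∀ m < 0, cf P m = 0}
  zero_mem' := fun _ _ => rfl
  add_mem' := fun {P Q} hP hQ m hm => by rw [cf_add, hP m hm, hQ m hm, add_zero]
  neg_mem' := fun {P} hP m hm => by rw [← zero_sub, cf_sub, hP m hm, sub_zero]; rfl

def RmOp : AddSubgroup TOp where
  carrier := {P | ∀ m, 0 ≤ m → cf P m = 0}
  zero_mem' := fun _ _ => rfl
  add_mem' := fun {P Q} hP hQ m hm => by rw [cf_add, hP m hm, hQ m hm, add_zero]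
  neg_mem' := fun {P} hP m hm => by rw [← zero_sub, cf_sub, hP m hm, sub_zero]; rfl

theorem cf_mul_eq_zero (P Q : TOp) (m : ℤ) (h : ∀ i, cf P i * Λz i (cf Q (m - i)) = 0) :
    cf (P * Q) m = 0 := by
  unfold cf
  rw [SkewMonoidAlgebra.coeff_mul_left, SkewMonoidAlgebra.sum_def']
  refine Finset.sum_eq_zero fun g _ => ?_
  have := h (Multiplicative.toAdd g)
  rw [toda_smul]
  rw [sub_eq_neg_add] at this
  exact this

theorem dOp_L (k : ℕ) :
    dOp k LOp = pOp (LOp ^ (k + 1)) * LOp - LOp * pOp (LOp ^ (k + 1)) := by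
  have hb : ∀ m, cf (pOp (LOp ^ (k + 1)) * LOp - LOp * pOp (LOp ^ (k + 1))) m = brkt k m := by
    intro m
    rw [cf_sub, cf_mul_L, cf_L_mul, cf_pOp, cf_pow, brkt]
  have hneg : ∀ m < -1, brkt k m = 0 := by
    intro m hm
    have h1 : ¬ 0 ≤ m - 1 := by omega
    have h2 : ¬ 0 ≤ m := by omega
    have h3 : ¬ 0 ≤ m + 1 := by omega
    simp only [brkt, mulRL, mulL, plusPart, if_neg h1, if_neg h2, if_neg h3]
    simp
  have hpos : ∀ m, 0 < m → brkt k m = 0 := by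
    intro m hm
    rw [← hb]
    have : pOp (LOp ^ (k + 1)) * LOp - LOp * pOp (LOp ^ (k + 1)) =
        LOp * (LOp ^ (k + 1) - pOp (LOp ^ (k + 1)))
          - (LOp ^ (k + 1) - pOp (LOp ^ (k + 1))) * LOp := by
      rw [mul_sub, sub_mul, ← pow_succ, ← pow_succ']; abel
    have hz : ∀ n, 0 ≤ n → cf (LOp ^ (k + 1) - pOp (LOp ^ (k + 1))) n = 0 := by
      intro n hn
      rw [cf_sub, cf_pOp, plusPart, if_pos hn, sub_self]
    rw [this, cf_sub, cf_mul_L, cf_L_mul, mulL, mulRL, hz (m - 1) (by omega), hz m (by omega),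
      hz (m + 1) (by omega)]
    simp
  apply TOp_ext
  intro m
  rw [hb, cf_dOp, LOp, cf_add, cf_add, cf_mono, cf_mono, cf_mono]
  rcases lt_trichotomy m 0 with h | h | h
  · rcases eq_or_ne m (-1) with h' | h'
    · subst h'
      simp only [wV]
      norm_num
      rw [D_w]; rfl
    · rw [hneg m (by omega), if_neg (by omega), if_neg (by omega), if_neg (by omega)]
      simp
  · subst h
    simp only [vV]
    norm_num
    rw [D_v]; rfl
  · rw [hpos m h, if_neg (by omega : ¬ (0:ℤ) = m), if_neg (by omega : ¬ (-1:ℤ) = m)]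
    split_ifs <;> simp

theorem dOp_comm_L (j k : ℕ) : dOp j (dOp k LOp) = dOp k (dOp j LOp) := by
  refine aux_commute pOp (dOp j) (dOp k) RpOp RmOp ?_ ?_ ?_ ?_ ?_ ?_ (dOp_mul j) (dOp_mul k) ?_ ?_
    LOp (j + 1) (k + 1) (dOp_L j) (dOp_L k)
  · intro P hP Q hQ m hm
    apply cf_mul_eq_zero
    intro i
    by_cases hi : i < 0
    · rw [hP i hi, zero_mul]
    · rw [hQ (m - i) (by omega), map_zero, mul_zero]
  · intro P hP Q hQ m hm
    apply cf_mul_eq_zero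
    intro i
    by_cases hi : 0 ≤ i
    · rw [hP i hi, zero_mul]
    · rw [hQ (m - i) (by omega), map_zero, mul_zero]
  · intro P m hm
    rw [cf_pOp, plusPart, if_neg (by omega)]
  · intro P m hm
    rw [cf_sub, cf_pOp, plusPart, if_pos hm, sub_self]
  · intro P hP
    apply TOp_ext
    intro m
    rw [cf_pOp, plusPart]
    split_ifs with h
    · rfl
    · rw [hP m (by omega)]
  · intro P hP
    apply TOp_ext
    intro m
    rw [cf_pOp, plusPart]
    split_ifs with h
    · rw [hP m h]; rfl
    · rfl
  all_goals
    intro P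
    apply TOp_ext
    intro m
    rw [cf_dOp, cf_pOp, cf_pOp, plusPart, plusPart]
    split_ifs
    · rw [cf_dOp]
    · rw [map_zero]

theorem Λz_v (i : ℤ) : Λz i (X (Sum.inl 0)) = X (Sum.inl i) := by
  induction i using Int.induction_on with
  | zero => rfl
  | succ i ih => rw [add_comm, Λz_add, ih, Λz_one, Λs_v, add_comm]
  | pred i ih =>
    rw [sub_eq_neg_add, Λz_add, ih, Λz_neg_one, AlgEquiv.symm_apply_eq, Λs_v]
    congr 2; ring

theorem Λz_w (i : ℤ) : Λz i (X (Sum.inr 0)) = X (Sum.inr i) := by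
  induction i using Int.induction_on with
  | zero => rfl
  | succ i ih => rw [add_comm, Λz_add, ih, Λz_one, Λs_w, add_comm]
  | pred i ih =>
    rw [sub_eq_neg_add, Λz_add, ih, Λz_neg_one, AlgEquiv.symm_apply_eq, Λs_w]
    congr 2; ring

theorem cf_L_zero : cf LOp 0 = X (Sum.inl 0) := by
  simp [LOp, cf_add, cf_mono, vV]

theorem cf_L_neg_one : cf LOp (-1) = X (Sum.inr 0) := by
  simp [LOp, cf_add, cf_mono, wV]

/-- The Toda lattice derivations pairwise commute:
for all j, k ≥ 0, D_j ∘ D_k = D_k ∘ D_j as derivations of the ring 𝒜. -/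
theorem toda_derivations_commute (j k : ℕ) (x : 𝒜) :
    Dtoda j (Dtoda k x) = Dtoda k (Dtoda j x) := by
  have h0 := congrArg (fun P => cf P 0) (dOp_comm_L j k)
  have h1 := congrArg (fun P => cf P (-1)) (dOp_comm_L j k)
  simp only [cf_dOp, cf_L_zero, cf_L_neg_one] at h0 h1
  have hbr : ⁅Dtoda j, Dtoda k⁆ = 0 := by
    apply MvPolynomial.derivation_ext
    rintro (i | i)
    · rw [Derivation.commutator_apply, ← Λz_v i]
      simp only [D_Λz]
      rw [h0, sub_self]; rfl
    · rw [Derivation.commutator_apply, ← Λz_w i]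
      simp only [D_Λz]
      rw [h1, sub_self]; rfl
  have := congrArg (fun D : Derivation ℤ 𝒜 𝒜 => D x) hbr
  simp only [Derivation.commutator_apply, Derivation.zero_apply] at this
  exact sub_eq_zero.mp this

end
end

section
/- For every integer j ≥ 0, the following identity of polynomials in n holds: (n/(j+1)) Σ_{j₁=0}^{j+1} ((−1)^{j₁}/2) C(j+1, j₁) C(n + 2j₁ − 1, 2j+1) + Σ_{j₁=0}^{j} (−1)^{j₁} C(j, j₁) C(n + 2j₁, 2j+1) = 0, where C(x, m) := x(x−1)⋯(x−m+1)/m! denotes the binomial coefficient as a polynomial in x. -/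
set_option synthInstance.maxHeartbeats 1000000
set_option maxHeartbeats 1000000

noncomputable section

open Polynomial

/-- The binomial coefficient C(p, m) = p (p-1) ⋯ (p-m+1) / m! of a polynomial
argument p, as a polynomial (in ℚ[n]). -/
def binomPoly (p : Polynomial ℚ) (m : ℕ) : Polynomial ℚ :=
  Polynomial.C ((m.factorial : ℚ)⁻¹) * ∏ t ∈ Finset.range m, (p - (t : ℚ) • 1)

theorem prod_cast_sub (N m : ℕ) :
    ∏ t ∈ Finset.range m, ((N : ℚ) - (t : ℚ)) = (N.descFactorial m : ℚ) := by
  induction m with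
  | zero => simp
  | succ k ih =>
    rw [Finset.prod_range_succ, ih, Nat.descFactorial_succ]
    rcases le_or_gt k N with h | h
    · push_cast [Nat.cast_sub h]
      ring
    · simp [Nat.descFactorial_of_lt h]

theorem eval_binomPoly (p : Polynomial ℚ) (m N : ℕ) (x : ℚ) (h : p.eval x = (N : ℚ)) :
    (binomPoly p m).eval x = (N.choose m : ℚ) := by
  have h0 : (m.factorial : ℚ) ≠ 0 := by exact_mod_cast m.factorial_ne_zero
  simp only [binomPoly, eval_mul, eval_C, eval_prod, eval_sub, eval_smul, eval_one, h,
    smul_eq_mul, mul_one]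
  rw [prod_cast_sub, Nat.descFactorial_eq_factorial_mul_choose]
  push_cast
  field_simp

/-- Key coefficient identity. -/
theorem key_coeff (m j : ℕ) :
    2 * ((j : ℚ) + 1) * ((1 + X : ℚ[X]) ^ (m + 1) * (2 + X) ^ j).coeff (j + 1) =
      ((m : ℚ) + 1) * ((1 + X : ℚ[X]) ^ m * (2 + X) ^ (j + 1)).coeff j := by
  induction j with
  | zero =>
    simp [coeff_one_add_X_pow, coeff_zero_eq_eval_zero]
    ring
  | succ j ih =>
    have hd := coeff_derivative ((1 + X : ℚ[X]) ^ (m + 1) * (2 + X) ^ (j + 1)) (j + 1)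
    have e1 : derivative ((1 + X : ℚ[X]) ^ (m + 1) * (2 + X) ^ (j + 1)) =
        C ((m : ℚ) + 1) * ((1 + X) ^ m * (2 + X) ^ (j + 1)) +
        C ((j : ℚ) + 1) * ((1 + X) ^ (m + 1) * (2 + X) ^ j) := by
      have h2 : derivative (2 + X : ℚ[X]) = 1 := by
        rw [derivative_add, derivative_X, derivative_ofNat, zero_add]
      have h1 : derivative (1 + X : ℚ[X]) = 1 := by simp
      rw [derivative_mul, derivative_pow_succ, derivative_pow_succ, h1, h2]
      ring
    have e2 : (1 + X : ℚ[X]) ^ m * (2 + X) ^ (j + 1 + 1) =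
        C 2 * ((1 + X) ^ m * (2 + X) ^ (j + 1)) + (1 + X) ^ m * (2 + X) ^ (j + 1) * X := by
      have : (C 2 : ℚ[X]) = 2 := rfl
      rw [this]; ring
    rw [e1, coeff_add, coeff_C_mul, coeff_C_mul] at hd
    rw [e2, coeff_add, coeff_C_mul, coeff_mul_X]
    push_cast at hd ⊢
    linear_combination (-2) * hd + ih

theorem sum_coeff (M j k : ℕ) :
    ∑ i ∈ Finset.range (j + 1), (-1 : ℚ) ^ i * (j.choose i : ℚ) * ((M + 2 * i).choose (k + j) : ℚ)
      = (-1) ^ j * ((1 + X : ℚ[X]) ^ M * (2 + X) ^ j).coeff k := by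
  have h : (1 + X : ℚ[X]) ^ M * (-(1 + X) ^ 2 + 1) ^ j =
      C ((-1) ^ j) * ((1 + X) ^ M * (2 + X) ^ j * X ^ j) := by
    rw [show (-(1 + X) ^ 2 + 1 : ℚ[X]) = (-1) * ((2 + X) * X) by ring, mul_pow, mul_pow]
    simp only [map_pow, map_neg, map_one]
    ring
  have h' := congrArg (fun p => p.coeff (k + j)) h
  simp only [coeff_C_mul, coeff_mul_X_pow] at h'
  rw [← h', add_pow (-(1 + X) ^ 2 : ℚ[X]) 1 j, Finset.mul_sum, finset_sum_coeff]
  refine Finset.sum_congr rfl fun i _ => ?_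
  rw [show (1 + X : ℚ[X]) ^ M * ((-(1 + X) ^ 2) ^ i * 1 ^ (j - i) * (j.choose i : ℚ[X])) =
    C ((-1) ^ i * (j.choose i : ℚ)) * (1 + X) ^ (M + 2 * i) by
      simp only [map_pow, map_neg, map_one, map_mul, map_natCast, one_pow]
      rw [neg_pow, ← pow_mul, pow_add]; ring, coeff_C_mul, coeff_one_add_X_pow]

/-- For every integer j ≥ 0, the identity
(n/(j+1)) Σ_{j₁=0}^{j+1} ((-1)^{j₁}/2) C(j+1, j₁) C(n + 2j₁ - 1, 2j+1)
 + Σ_{j₁=0}^{j} (-1)^{j₁} C(j, j₁) C(n + 2j₁, 2j+1) = 0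
holds in the polynomial ring ℚ[n], where C(x, m) = x(x-1)⋯(x-m+1)/m!. -/
theorem gue_binomial_identity (j : ℕ) :
    Polynomial.C ((j + 1 : ℚ)⁻¹) * Polynomial.X *
      (∑ j₁ ∈ Finset.range (j + 2),
        Polynomial.C ((-1 : ℚ) ^ j₁ / 2 * ((j + 1).choose j₁ : ℚ)) *
          binomPoly (Polynomial.X + Polynomial.C (2 * (j₁ : ℚ) - 1)) (2 * j + 1)) +
    (∑ j₁ ∈ Finset.range (j + 1),
        Polynomial.C ((-1 : ℚ) ^ j₁ * (j.choose j₁ : ℚ)) *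
          binomPoly (Polynomial.X + Polynomial.C (2 * (j₁ : ℚ))) (2 * j + 1)) = 0 := by
  apply Polynomial.eq_of_infinite_eval_eq
  refine Set.Infinite.mono (s := Set.range fun m : ℕ => ((m : ℚ) + 1)) ?_ ?_
  swap
  · apply Set.infinite_range_of_injective
    intro a b h
    simpa using h
  rintro _ ⟨m, rfl⟩
  have b1 : ∀ i : ℕ, (binomPoly (X + C (2 * (i : ℚ) - 1)) (2 * j + 1)).eval ((m : ℚ) + 1) =
      ((m + 2 * i).choose (j + (j + 1)) : ℚ) := fun i => by
    rw [eval_binomPoly _ _ (m + 2 * i)]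
    · congr 2; ring
    · simp only [eval_add, eval_X, eval_C]; push_cast; ring
  have b2 : ∀ i : ℕ, (binomPoly (X + C (2 * (i : ℚ))) (2 * j + 1)).eval ((m : ℚ) + 1) =
      ((m + 1 + 2 * i).choose (j + 1 + j) : ℚ) := fun i => by
    rw [eval_binomPoly _ _ (m + 1 + 2 * i)]
    · congr 2; ring
    · simp only [eval_add, eval_X, eval_C]; push_cast; ring
  have s1 := sum_coeff m (j + 1) j
  have s2 := sum_coeff (m + 1) j (j + 1)
  have k := key_coeff m j
  simp only [Set.mem_setOf_eq, eval_add, eval_mul, eval_finset_sum, eval_C, eval_X, b1, b2,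
    eval_zero]
  rw [s2]
  have s3 : ∑ i ∈ Finset.range (j + 2), (-1 : ℚ) ^ i / 2 * ((j + 1).choose i : ℚ) *
      ((m + 2 * i).choose (j + (j + 1)) : ℚ) =
      (1 / 2) * ((-1) ^ (j + 1) * ((1 + X : ℚ[X]) ^ m * (2 + X) ^ (j + 1)).coeff j) := by
    rw [← s1, Finset.mul_sum]
    exact Finset.sum_congr rfl fun i _ => by ring
  rw [s3]
  have hj : (j : ℚ) + 1 ≠ 0 := by positivity
  field_simp
  rw [pow_succ]
  linear_combination ((-1) ^ j) * k

end
end
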